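/- Amplitude estimation error for the quadratic method. Let m ≥ s ≥ 1 and β > 1, and suppose x = {x_1,…,x_s} ⊂ 𝕋 and x̂ = {x̂_1,…,x̂_s} ⊂ 𝕋 are sets of cardinality s with Δ(x) ≥ 2πβ/m and Δ(x̂) ≥ 2πβ/m. Let a ∈ (ℂ∖{0})^s, y the clean samples of (x,a), η ∈ ℂ^{2m−1}, T̃ := T(y+η), Φ̂ := Φ(m,x̂), and â := diag(Φ̂⁺ T̃ (Φ̂⁺)^*). Then max_{j=1,…,s} |a_j − â_j| ≤ C(β)·√s·a_max·m·max_{j=1,…,s} |x_j − x̂_j| + (β/(β−1))·‖T(η)‖_2/m, where C(β) := (1/√3)·(1 + √((β+1)/(β−1)))·√((β+1)/β)·(β/(β−1)) and a_max := max_j |a_j|. -/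

import Mathlib

open scoped Real BigOperators Matrix
open Matrix

noncomputable section

/-- Distance on the torus `ℝ/2πℤ` between (representatives of) two points. -/
def torusDist (u v : ℝ) : ℝ := ⨅ n : ℤ, |u - v + 2 * Real.pi * n|

/-- The nonharmonic Fourier matrix `Φ(n, x) = (e^{i k x_j})_{k ∈ I(n), j}`,
where `I(n) = {-(n-1)/2, …, (n-1)/2}`. -/
def fourierMatrix (n : ℕ) {s : ℕ} (x : Fin s → ℝ) : Matrix (Fin n) (Fin s) ℂ :=
  fun k j => Complex.exp (Complex.I * (((((k : ℕ) : ℝ) - ((n : ℝ) - 1) / 2) * x j : ℝ) : ℂ))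

/-- Spectral norm (ℓ² → ℓ² operator norm) of a complex matrix. -/
def specNorm {d e : ℕ} (M : Matrix (Fin d) (Fin e) ℂ) : ℝ :=
  ‖LinearMap.toContinuousLinearMap (Matrix.toEuclideanLin M)‖

/-- The Toeplitz matrix `T(y)` of `y ∈ ℂ^{2m-1}` (indexed by `{-(m-1),…,m-1}`,
realized as `Fin (2m-1)` via the shift `k ↦ k + (m-1)`), with entries `T(y)_{j,k} = y_{j-k}`. -/
def toeplitz (m : ℕ) (y : Fin (2 * m - 1) → ℂ) : Matrix (Fin m) (Fin m) ℂ :=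
  fun j k => y ⟨(j : ℕ) + (m - 1) - (k : ℕ), by
    have hj := j.isLt; have hk := k.isLt; omega⟩

/-- Clean samples `y_k = Σ_j a_j e^{i k x_j}` for `k ∈ {-(m-1),…,m-1}`,
realized as a vector in `ℂ^{2m-1}` via the shift `k ↦ k + (m-1)`. -/
def cleanSamples (m : ℕ) {s : ℕ} (x : Fin s → ℝ) (a : Fin s → ℂ) :
    Fin (2 * m - 1) → ℂ :=
  fun k => ∑ j, a j *
    Complex.exp (Complex.I * (((((k : ℕ) : ℝ) - ((m : ℝ) - 1)) * x j : ℝ) : ℂ))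

/-! After shifting the phases `x_j` by multiples of `2π`, which changes neither the samples nor the
torus distances, we may assume that `|x_j - x̂_j|` is the torus distance.

The Gram matrix of a Fourier matrix is a Dirichlet kernel, whose off-diagonal entries
`sin (m u) csc u` form a difference of two diagonal unitary conjugates of the Hilbert kernel
`csc (z_j - z_k)`. By the addition formula `csc a csc b = csc (a - b) (cot b - cot a)`, the square
of the self-adjoint matrix `i csc (z_j - z_k)` is a commutator with a diagonal matrix plus a
remainder. The commutator is invisible to the quadratic form at an extremal eigenvector, so only
the row sums of the remainder count; the elementary bound `t² (1 + 2 |cos t|) ≤ 3 sin² t` for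
`|t| ≤ π / 2` together with `ζ(2) = π² / 6` then bounds the Hilbert kernel by `π / δ` for nodes
`δ`-separated modulo `π`. Hence the Gram matrix is within `m / β` of `m • 1`, which controls `‖Φ‖`
and `‖Φ̂⁺‖`.

Finally, `Φ̂⁺ Φ̂ = 1` turns `Φ̂⁺ Φ` into `1 + Φ̂⁺ (Φ - Φ̂)`, so that `diag a - Φ̂⁺ T̃ (Φ̂⁺)ᴴ` is of
first order in `Φ - Φ̂` and `T(η)`. Its diagonal is bounded by its spectral norm, and `‖Φ - Φ̂‖` by
the Frobenius norm.
-/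

open scoped Matrix.Norms.L2Operator

lemma pi_norm_le_iSup_norm {ι E : Type*} [Fintype ι] [SeminormedAddGroup E] (f : ι → E) :
    ‖f‖ ≤ ⨆ i, ‖f i‖ :=
  (pi_norm_le_iff_of_nonneg (Real.iSup_nonneg fun i => norm_nonneg (f i))).2 fun i =>
    Finite.le_ciSup (fun i => ‖f i‖) i

section L2OpNorm

variable {m n 𝕜 : Type*} [Fintype m] [Fintype n] [DecidableEq n] [RCLike 𝕜]

lemma norm_entry_le_l2_opNorm (A : Matrix m n 𝕜) (i : m) (j : n) : ‖A i j‖ ≤ ‖A‖ := by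
  have hcol := A.l2_opNorm_mulVec (EuclideanSpace.single j 1)
  have hentry := PiLp.norm_apply_le (WithLp.toLp 2 (A *ᵥ Pi.single j 1)) i
  simp only [mulVec_single_one, col_apply] at hentry
  simpa using hentry.trans (by simpa using hcol)

lemma l2_opNorm_le_sqrt_sum_sq (A : Matrix m n 𝕜) : ‖A‖ ≤ √(∑ i, ∑ j, ‖A i j‖ ^ 2) := by
  rw [l2_opNorm_def]
  refine ContinuousLinearMap.opNorm_le_bound _ (Real.sqrt_nonneg _) fun v => ?_
  have hrow (i : m) : ‖(A *ᵥ v.ofLp) i‖ ^ 2 ≤ (∑ j, ‖A i j‖ ^ 2) * ∑ j, ‖v j‖ ^ 2 := by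
    calc ‖(A *ᵥ v.ofLp) i‖ ^ 2 ≤ (∑ j, ‖A i j‖ * ‖v j‖) ^ 2 := by
          gcongr
          exact (norm_sum_le _ _).trans_eq (by simp only [norm_mul])
      _ ≤ _ := Finset.sum_mul_sq_le_sq_mul_sq _ _ _
  rw [EuclideanSpace.norm_eq v, ← Real.sqrt_mul (by positivity), EuclideanSpace.norm_eq,
    Finset.sum_mul]
  exact Real.sqrt_le_sqrt (Finset.sum_le_sum fun i _ => hrow i)

lemma l2_opNorm_one_le : ‖(1 : Matrix n n 𝕜)‖ ≤ 1 := by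
  simpa only [← diagonal_one, l2_opNorm_diagonal, norm_one] using pi_norm_const_le (1 : 𝕜)

lemma exists_abs_eigenvalues_eq_l2_opNorm [Nonempty n] {A : Matrix n n ℂ} (hA : A.IsHermitian) :
    ∃ i, |hA.eigenvalues i| = ‖A‖ := by
  have hmem := CStarAlgebra.norm_or_neg_norm_mem_spectrum hA
  rw [hA.spectrum_real_eq_range_eigenvalues] at hmem
  obtain ⟨i, hi⟩ | ⟨i, hi⟩ := hmem <;> exact ⟨i, by simp [hi]⟩

lemma l2_opNorm_le_of_forall_sum_norm_le {A : Matrix n n ℂ} (hA : A.IsHermitian) {r : ℝ}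
    (hr : 0 ≤ r) (hrow : ∀ i, ∑ j, ‖A i j‖ ≤ r) : ‖A‖ ≤ r := by
  cases isEmpty_or_nonempty n
  · simpa [Subsingleton.elim A 0] using hr
  obtain ⟨i, hi⟩ := exists_abs_eigenvalues_eq_l2_opNorm hA
  have hev : Module.End.HasEigenvalue (toLin' A) (hA.eigenvalues i : ℂ) := by
    refine Module.End.hasEigenvalue_of_hasEigenvector (x := (hA.eigenvectorBasis i).ofLp) ⟨?_, ?_⟩
    · rw [Module.End.mem_eigenspace_iff, toLin'_apply, hA.mulVec_eigenvectorBasis, Complex.coe_smul]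
    · simpa using hA.eigenvectorBasis.orthonormal.ne_zero i
  obtain ⟨k, hk⟩ := eigenvalue_mem_ball hev
  rw [mem_closedBall_iff_norm] at hk
  calc ‖A‖ = ‖(hA.eigenvalues i : ℂ)‖ := by rw [Complex.norm_real, Real.norm_eq_abs, hi]
    _ ≤ ‖A k k‖ + ∑ j ∈ Finset.univ.erase k, ‖A k j‖ :=
        (norm_le_norm_add_norm_sub' _ (A k k)).trans (by gcongr)
    _ = ∑ j, ‖A k j‖ := Finset.add_sum_erase _ (fun j => ‖A k j‖) (Finset.mem_univ k)
    _ ≤ r := hrow k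

-- The commutator's quadratic form vanishes at an eigenvector of `A`, in particular an extremal one.
lemma l2_opNorm_sq_le_of_mul_self_eq_commutator_add {A C S : Matrix n n ℂ} (hA : A.IsHermitian)
    (h : A * A = A * C - C * A + S) : ‖A‖ ^ 2 ≤ ‖S‖ := by
  cases isEmpty_or_nonempty n
  · simp [Subsingleton.elim A 0]
  obtain ⟨i, hi⟩ := exists_abs_eigenvalues_eq_l2_opNorm hA
  set v := hA.eigenvectorBasis i
  set μ := hA.eigenvalues i
  have hv : ‖v‖ = 1 := hA.eigenvectorBasis.orthonormal.1 i
  have hAv : A *ᵥ v.ofLp = (μ : ℂ) • v.ofLp := by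
    rw [hA.mulVec_eigenvectorBasis, Complex.coe_smul]
  have hvA : star v.ofLp ᵥ* A = (μ : ℂ) • star v.ofLp := by
    simpa [star_mulVec, hA.eq] using congrArg star hAv
  have hform : ((μ ^ 2 : ℝ) : ℂ) = star v.ofLp ⬝ᵥ S *ᵥ v.ofLp := by
    have hvv : star v.ofLp ⬝ᵥ v.ofLp = 1 := by
      rw [dotProduct_comm, ← EuclideanSpace.inner_eq_star_dotProduct,
        inner_self_eq_norm_sq_to_K, hv]
      simp
    have := congrArg (fun M => star v.ofLp ⬝ᵥ M *ᵥ v.ofLp) h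
    simp only [add_mulVec, sub_mulVec, ← mulVec_mulVec, hAv, dotProduct_add, dotProduct_sub,
      dotProduct_mulVec, hvA, mulVec_smul] at this
    simp only [← dotProduct_mulVec, smul_dotProduct, dotProduct_smul, hvv, smul_eq_mul] at this
    push_cast
    linear_combination this
  calc ‖A‖ ^ 2 = ‖((μ ^ 2 : ℝ) : ℂ)‖ := by
        rw [Complex.norm_real, Real.norm_of_nonneg (sq_nonneg μ), ← hi, sq_abs]
    _ ≤ ‖v‖ * ‖WithLp.toLp 2 (S *ᵥ v.ofLp)‖ := by
        rw [hform, dotProduct_comm]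
        exact norm_inner_le_norm v (WithLp.toLp 2 (S *ᵥ v.ofLp))
    _ ≤ ‖v‖ * (‖S‖ * ‖v‖) := by gcongr; exact S.l2_opNorm_mulVec v
    _ = ‖S‖ := by rw [hv, one_mul, mul_one]

lemma isUnit_of_norm_sub_smul_one_lt {G : Matrix n n 𝕜} {c : ℝ}
    (hG : ‖G - (c : 𝕜) • 1‖ < c) : IsUnit G := by
  have hc : 0 < c := (norm_nonneg _).trans_lt hG
  have hc' : (c : 𝕜) ≠ 0 := by exact_mod_cast hc.ne'
  have hunit : IsUnit (1 - (c : 𝕜)⁻¹ • ((c : 𝕜) • 1 - G)) := by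
    apply isUnit_one_sub_of_norm_lt_one
    rwa [norm_smul, norm_sub_rev, norm_inv, RCLike.norm_ofReal, abs_of_pos hc,
      inv_mul_lt_one₀ hc]
  rw [smul_sub, inv_smul_smul₀ hc', sub_sub_cancel] at hunit
  simpa [smul_smul, hc'] using hunit.smul (Units.mk0 (c : 𝕜) hc')

lemma norm_inv_le_of_norm_sub_smul_one_le {G : Matrix n n 𝕜} {c δ : ℝ} (hδ : δ < c)
    (hG : ‖G - (c : 𝕜) • 1‖ ≤ δ) : ‖G⁻¹‖ ≤ (c - δ)⁻¹ := by
  have hc : 0 < c := ((norm_nonneg _).trans hG).trans_lt hδ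
  have hunit : IsUnit G.det :=
    G.isUnit_iff_isUnit_det.1 (isUnit_of_norm_sub_smul_one_lt (hG.trans_lt hδ))
  have hexpand : (c : 𝕜) • G⁻¹ = 1 - (G - (c : 𝕜) • 1) * G⁻¹ := by
    rw [sub_mul, mul_nonsing_inv _ hunit, smul_mul_assoc, one_mul, sub_sub_cancel]
  have hle : c * ‖G⁻¹‖ ≤ 1 + δ * ‖G⁻¹‖ := by
    calc c * ‖G⁻¹‖ = ‖(c : 𝕜) • G⁻¹‖ := by rw [norm_smul, RCLike.norm_ofReal, abs_of_pos hc]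
      _ ≤ ‖(1 : Matrix n n 𝕜)‖ + ‖(G - (c : 𝕜) • 1) * G⁻¹‖ := hexpand ▸ norm_sub_le _ _
      _ ≤ 1 + δ * ‖G⁻¹‖ := by
          gcongr
          · exact l2_opNorm_one_le
          · exact (norm_mul_le _ _).trans (by gcongr)
  rw [← one_div (c - δ), le_div_iff₀ (sub_pos.2 hδ)]
  linarith

lemma l2_opNorm_le_sqrt_of_norm_gram_sub_le {Ψ : Matrix m n 𝕜} {c δ : ℝ} (hc : 0 ≤ c)
    (hΨ : ‖Ψᴴ * Ψ - (c : 𝕜) • 1‖ ≤ δ) : ‖Ψ‖ ≤ √(c + δ) := by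
  apply Real.le_sqrt_of_sq_le
  calc ‖Ψ‖ ^ 2 = ‖(c : 𝕜) • 1 + (Ψᴴ * Ψ - (c : 𝕜) • 1)‖ := by
        rw [add_sub_cancel, l2_opNorm_conjTranspose_mul_self, sq]
    _ ≤ ‖(c : 𝕜) • (1 : Matrix n n 𝕜)‖ + ‖Ψᴴ * Ψ - (c : 𝕜) • 1‖ := norm_add_le _ _
    _ ≤ c + δ := by
        gcongr
        rw [norm_smul, RCLike.norm_ofReal, abs_of_nonneg hc]
        exact mul_le_of_le_one_right hc l2_opNorm_one_le

end L2OpNorm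

section LeftPinv

variable {m n 𝕜 : Type*} [Fintype m] [Fintype n] [DecidableEq n] [RCLike 𝕜]

/-- The Moore–Penrose pseudoinverse `(Ψᴴ Ψ)⁻¹ Ψᴴ` of a matrix of full column rank. -/
def leftPinv (Ψ : Matrix m n 𝕜) : Matrix n m 𝕜 := (Ψᴴ * Ψ)⁻¹ * Ψᴴ

lemma leftPinv_mul_self {Ψ : Matrix m n 𝕜} (hΨ : IsUnit (Ψᴴ * Ψ)) : leftPinv Ψ * Ψ = 1 := by
  rw [leftPinv, Matrix.mul_assoc, nonsing_inv_mul _ ((isUnit_iff_isUnit_det _).1 hΨ)]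

lemma l2_opNorm_leftPinv_sq [DecidableEq m] {Ψ : Matrix m n 𝕜} (hΨ : IsUnit (Ψᴴ * Ψ)) :
    ‖leftPinv Ψ‖ ^ 2 = ‖(Ψᴴ * Ψ)⁻¹‖ := by
  have hmul : leftPinv Ψ * (leftPinv Ψ)ᴴ = (Ψᴴ * Ψ)⁻¹ := by
    rw [leftPinv, conjTranspose_mul, conjTranspose_conjTranspose, ← Matrix.mul_assoc,
      Matrix.mul_assoc _ Ψᴴ, nonsing_inv_mul _ ((isUnit_iff_isUnit_det _).1 hΨ), Matrix.one_mul,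
      conjTranspose_nonsing_inv, conjTranspose_mul, conjTranspose_conjTranspose]
  have := l2_opNorm_conjTranspose_mul_self (leftPinv Ψ)ᴴ
  rw [conjTranspose_conjTranspose, hmul, l2_opNorm_conjTranspose] at this
  rw [this, sq]

lemma norm_sub_mul_mul_conjTranspose_le [DecidableEq m] {P : Matrix n m 𝕜} {Φ Ψ : Matrix m n 𝕜}
    (hP : P * Ψ = 1) (D : Matrix n n 𝕜) (N : Matrix m m 𝕜) :
    ‖D - P * (Φ * D * Φᴴ + N) * Pᴴ‖ ≤
      ‖P‖ * ‖Φ - Ψ‖ * ‖D‖ * (1 + ‖P‖ * ‖Φ‖) + ‖P‖ ^ 2 * ‖N‖ := by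
  set E := P * (Φ - Ψ) with hE
  have hPΦ : P * Φ = 1 + E := by rw [hE, Matrix.mul_sub, hP, add_sub_cancel]
  have hexpand : D - P * (Φ * D * Φᴴ + N) * Pᴴ = -(D * Eᴴ + E * D * (P * Φ)ᴴ + P * N * Pᴴ) := by
    have hΦ : P * (Φ * D * Φᴴ + N) * Pᴴ = P * Φ * D * (P * Φ)ᴴ + P * N * Pᴴ := by
      simp only [conjTranspose_mul, Matrix.mul_add, Matrix.add_mul, Matrix.mul_assoc]
    have hsplit : P * Φ * D * (P * Φ)ᴴ = D + D * Eᴴ + E * D * (P * Φ)ᴴ := by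
      simp only [hPΦ, conjTranspose_add, conjTranspose_one]
      noncomm_ring
    rw [hΦ, hsplit]
    abel
  have hEnorm : ‖E‖ ≤ ‖P‖ * ‖Φ - Ψ‖ := l2_opNorm_mul _ _
  have hPΦnorm : ‖(P * Φ)ᴴ‖ ≤ ‖P‖ * ‖Φ‖ := by
    rw [l2_opNorm_conjTranspose]
    exact l2_opNorm_mul _ _
  have hN : ‖P * N * Pᴴ‖ ≤ ‖P‖ * ‖N‖ * ‖P‖ := by
    refine (l2_opNorm_mul _ _).trans ?_
    rw [l2_opNorm_conjTranspose]
    gcongr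
    exact l2_opNorm_mul _ _
  have hleft : ‖D * Eᴴ‖ ≤ ‖D‖ * (‖P‖ * ‖Φ - Ψ‖) := by
    refine (norm_mul_le _ _).trans ?_
    rw [l2_opNorm_conjTranspose]
    gcongr
  have hright : ‖E * D * (P * Φ)ᴴ‖ ≤ ‖P‖ * ‖Φ - Ψ‖ * ‖D‖ * (‖P‖ * ‖Φ‖) := by
    refine (norm_mul_le _ _).trans ?_
    gcongr
    exact (norm_mul_le _ _).trans (by gcongr)
  rw [hexpand, norm_neg]
  refine (norm_add₃_le).trans ?_
  linarith

end LeftPinv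

section Separation

variable {ι : Type*} {c : ℝ}

lemma exists_abs_add_int_mul_eq_addCircle_norm (p x : ℝ) :
    ∃ n : ℤ, |x + n * p| = ‖(x : AddCircle p)‖ :=
  ⟨-round (p⁻¹ * x), by rw [AddCircle.norm_eq]; push_cast; congr 1; ring⟩

lemma addCircle_norm_le_abs_add_int_mul (p x : ℝ) (n : ℤ) :
    ‖(x : AddCircle p)‖ ≤ |x + n * p| := by
  have hle : ‖((x + n * p : ℝ) : AddCircle p)‖ ≤ |x + n * p| := QuotientAddGroup.norm_mk_le_norm
  simpa using hle

lemma torusDist_eq_addCircle_norm (u v : ℝ) :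
    torusDist u v = ‖((u - v : ℝ) : AddCircle (2 * π))‖ := by
  have hbdd : BddBelow (Set.range fun n : ℤ => |u - v + 2 * π * n|) :=
    ⟨0, by rintro _ ⟨n, rfl⟩; exact abs_nonneg _⟩
  apply le_antisymm
  · obtain ⟨n, hn⟩ := exists_abs_add_int_mul_eq_addCircle_norm (2 * π) (u - v)
    rw [← hn, mul_comm]
    exact ciInf_le hbdd n
  · refine le_ciInf fun n => ?_
    rw [mul_comm (2 * π)]
    exact addCircle_norm_le_abs_add_int_mul _ _ n

lemma sum_one_div_sq_le_of_separated_pos (hc : 0 < c) (s : Finset ι) (y : ι → ℝ)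
    (hy : ∀ i ∈ s, c ≤ y i) (hsep : (s : Set ι).Pairwise fun i j => c ≤ |y i - y j|) :
    ∑ i ∈ s, 1 / y i ^ 2 ≤ π ^ 2 / (6 * c ^ 2) := by
  have hquot (i : ι) (hi : i ∈ s) : 1 ≤ y i / c := (one_le_div₀ hc).2 (hy i hi)
  have hinj : Set.InjOn (fun i => ⌊y i / c⌋₊) s := by
    intro i hi j hj hij
    by_contra hne
    have hfloor : ⌊y i / c⌋ = ⌊y j / c⌋ := by
      rw [← Int.natCast_floor_eq_floor (zero_le_one.trans (hquot i hi)),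
        ← Int.natCast_floor_eq_floor (zero_le_one.trans (hquot j hj))]
      exact congrArg _ hij
    have hlt := Int.abs_sub_lt_one_of_floor_eq_floor hfloor
    rw [← sub_div, abs_div, abs_of_pos hc, div_lt_one hc] at hlt
    exact hlt.not_ge (hsep hi hj hne)
  calc ∑ i ∈ s, 1 / y i ^ 2
      ≤ ∑ i ∈ s, 1 / c ^ 2 * (1 / (⌊y i / c⌋₊ : ℝ) ^ 2) := by
        refine Finset.sum_le_sum fun i hi => ?_
        have hpos : (0 : ℝ) < ⌊y i / c⌋₊ := by
          exact_mod_cast Nat.floor_pos.2 (hquot i hi)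
        rw [one_div_mul_one_div, ← mul_pow]
        gcongr
        rw [← le_div_iff₀' hc]
        exact Nat.floor_le (zero_le_one.trans (hquot i hi))
    _ = 1 / c ^ 2 * ∑ n ∈ s.image fun i => ⌊y i / c⌋₊, 1 / (n : ℝ) ^ 2 := by
        rw [Finset.sum_image hinj, Finset.mul_sum]
    _ ≤ 1 / c ^ 2 * (π ^ 2 / 6) := by
        gcongr
        exact sum_le_hasSum _ (fun n _ => by positivity) hasSum_zeta_two
    _ = π ^ 2 / (6 * c ^ 2) := by ring

lemma sum_one_div_sq_le_of_separated (hc : 0 < c) (s : Finset ι) (y : ι → ℝ)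
    (hy : ∀ i ∈ s, c ≤ |y i|) (hsep : (s : Set ι).Pairwise fun i j => c ≤ |y i - y j|) :
    ∑ i ∈ s, 1 / y i ^ 2 ≤ π ^ 2 / (3 * c ^ 2) := by
  have hpos : ∑ i ∈ s with 0 < y i, 1 / y i ^ 2 ≤ π ^ 2 / (6 * c ^ 2) := by
    refine sum_one_div_sq_le_of_separated_pos hc _ y (fun i hi => ?_)
      (hsep.mono (Finset.coe_subset.2 (Finset.filter_subset _ _)))
    obtain ⟨his, hi⟩ := Finset.mem_filter.1 hi
    simpa only [abs_of_pos hi] using hy i his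
  have hneg : ∑ i ∈ s with ¬0 < y i, 1 / (-y i) ^ 2 ≤ π ^ 2 / (6 * c ^ 2) := by
    refine sum_one_div_sq_le_of_separated_pos hc _ (fun i => -y i) (fun i hi => ?_)
      fun i hi j hj hij => ?_
    · obtain ⟨his, hi⟩ := Finset.mem_filter.1 hi
      simpa only [abs_of_nonpos (not_lt.1 hi)] using hy i his
    · simp only [neg_sub_neg, abs_sub_comm (y j)]
      exact hsep (Finset.mem_filter.1 hi).1 (Finset.mem_filter.1 hj).1 hij
  simp only [neg_sq] at hneg
  rw [← Finset.sum_filter_add_sum_filter_not s fun i => 0 < y i]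
  calc _ ≤ π ^ 2 / (6 * c ^ 2) + π ^ 2 / (6 * c ^ 2) := add_le_add hpos hneg
    _ = π ^ 2 / (3 * c ^ 2) := by ring

lemma sum_one_div_addCircle_norm_sq_le [Fintype ι] {p : ℝ} (hc : 0 < c) {z : ι → ℝ}
    (hz : Pairwise fun j k => c ≤ ‖((z j - z k : ℝ) : AddCircle p)‖) (r : ι) :
    ∑ t, 1 / ‖((z r - z t : ℝ) : AddCircle p)‖ ^ 2 ≤ π ^ 2 / (3 * c ^ 2) := by
  classical
  choose n hn using fun t => exists_abs_add_int_mul_eq_addCircle_norm p (z r - z t)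
  rw [← Finset.sum_erase (a := r) (f := fun t => 1 / ‖((z r - z t : ℝ) : AddCircle p)‖ ^ 2) _
    (by simp)]
  simp only [← hn, sq_abs]
  refine sum_one_div_sq_le_of_separated hc _ (fun t => z r - z t + n t * p)
    (fun t ht => (hz (Finset.ne_of_mem_erase ht).symm).trans_eq (hn t).symm)
    fun t _ t' _ hne => (hz hne.symm).trans ?_
  refine (addCircle_norm_le_abs_add_int_mul p _ (n t - n t')).trans_eq (congrArg abs ?_)
  push_cast
  ring

end Separation

section TrigBounds

lemma cos_le_one_sub_sq_add_quartic {x : ℝ} (hx : 0 ≤ x) (hx' : x ^ 2 ≤ 24) :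
    Real.cos x ≤ 1 - x ^ 2 / 2 + x ^ 4 / 24 := by
  have hsin : x / 2 - (x / 2) ^ 3 / 6 ≤ Real.sin (x / 2) := Real.sin_ge_sub_cube (by positivity)
  have hnonneg : 0 ≤ x / 2 - (x / 2) ^ 3 / 6 := by nlinarith
  calc Real.cos x = 1 - 2 * Real.sin (x / 2) ^ 2 := by
        rw [Real.sin_sq_eq_half_sub, mul_div_cancel₀ x two_ne_zero]
        ring
    _ ≤ 1 - 2 * (x / 2 - (x / 2) ^ 3 / 6) ^ 2 := by gcongr
    _ ≤ 1 - x ^ 2 / 2 + x ^ 4 / 24 := by nlinarith [sq_nonneg (x ^ 3)]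

lemma sq_mul_one_add_two_mul_abs_cos_le {y : ℝ} (hy : |y| ≤ π / 2) :
    y ^ 2 * (1 + 2 * |Real.cos y|) ≤ 3 * Real.sin y ^ 2 := by
  wlog hy₀ : 0 ≤ y generalizing y
  · simpa using this (y := -y) (by simpa using hy) (by linarith)
  rw [abs_of_nonneg hy₀] at hy
  have hcos₀ : 0 ≤ Real.cos y :=
    Real.cos_nonneg_of_neg_pi_div_two_le_of_le (by linarith [Real.pi_pos]) hy
  have hy₂ : y ^ 2 ≤ 6 := by nlinarith [Real.pi_lt_four]
  have hnonneg : 0 ≤ y - y ^ 3 / 6 := by nlinarith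
  have hcos := cos_le_one_sub_sq_add_quartic hy₀ (by linarith)
  have hsin := Real.sin_ge_sub_cube hy₀
  calc y ^ 2 * (1 + 2 * |Real.cos y|)
      ≤ y ^ 2 * (1 + 2 * (1 - y ^ 2 / 2 + y ^ 4 / 24)) := by rw [abs_of_nonneg hcos₀]; gcongr
    _ = 3 * (y - y ^ 3 / 6) ^ 2 := by ring
    _ ≤ 3 * Real.sin y ^ 2 := by gcongr

lemma one_add_two_mul_abs_cos_mul_inv_sin_sq_le (t : ℝ) :
    (1 + 2 * |Real.cos t|) * (Real.sin t)⁻¹ ^ 2 ≤ 3 / ‖(t : AddCircle π)‖ ^ 2 := by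
  obtain ⟨n, hn⟩ := exists_abs_add_int_mul_eq_addCircle_norm π t
  have hsin : Real.sin (t + n * π) ^ 2 = Real.sin t ^ 2 := by
    rw [← sq_abs, Real.sin_add_int_mul_pi, abs_mul, abs_neg_one_zpow, one_mul, sq_abs]
  have hcos : |Real.cos (t + n * π)| = |Real.cos t| := by
    rw [Real.cos_add_int_mul_pi, abs_mul, abs_neg_one_zpow, one_mul]
  have hhalf : |t + n * π| ≤ π / 2 := by
    simpa only [hn, abs_of_pos Real.pi_pos] using
      AddCircle.norm_le_half_period π Real.pi_ne_zero (x := (t : AddCircle π))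
  have hkey := sq_mul_one_add_two_mul_abs_cos_le hhalf
  rw [hsin, hcos] at hkey
  rw [← hn, sq_abs, inv_pow, ← div_eq_mul_inv]
  obtain hsin₀ | hsin₀ := (sq_nonneg (Real.sin t)).eq_or_lt
  · rw [← hsin₀, div_zero]
    positivity
  obtain hsq₀ | hsq₀ := (sq_nonneg (t + n * π)).eq_or_lt
  · exact absurd hsin₀ (by simp [← hsin, pow_eq_zero_iff two_ne_zero |>.1 hsq₀.symm])
  · rw [div_le_div_iff₀ hsin₀ hsq₀, mul_comm]
    exact hkey

end TrigBounds

section Hilbert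

variable {ι : Type*}

/-- The Hilbert kernel `csc (z_j - z_k)`; the convention `0⁻¹ = 0` makes its diagonal vanish. -/
def cscMatrix (z : ι → ℝ) : Matrix ι ι ℂ := fun j k => ((Real.sin (z j - z k))⁻¹ : ℝ)

/-- The diagonal matrix whose commutator with `i • cscMatrix z` absorbs the off-diagonal part of
the square of `i • cscMatrix z`, up to `cscMatrixRemainder z`. -/
def cotDiagonal [Fintype ι] [DecidableEq ι] (z : ι → ℝ) : Matrix ι ι ℂ :=
  diagonal fun t => -Complex.I * (∑ q, Real.cot (z t - z q) : ℝ)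

/-- The part of the square of `i • cscMatrix z` that is not a commutator with `cotDiagonal z`. -/
def cscMatrixRemainder [Fintype ι] [DecidableEq ι] (z : ι → ℝ) : Matrix ι ι ℂ := fun r t =>
  ((2 * ((Real.sin (z r - z t))⁻¹ * Real.cot (z r - z t)) +
    if r = t then ∑ q, (Real.sin (z r - z q))⁻¹ ^ 2 else 0 : ℝ) : ℂ)

lemma inv_sin_mul_inv_sin_eq {a b : ℝ} (ha : Real.sin a ≠ 0) (hb : Real.sin b ≠ 0)
    (hab : Real.sin (a - b) ≠ 0) :
    (Real.sin a)⁻¹ * (Real.sin b)⁻¹ = (Real.sin (a - b))⁻¹ * (Real.cot b - Real.cot a) := by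
  rw [Real.cot_eq_cos_div_sin, Real.cot_eq_cos_div_sin]
  field_simp
  rw [Real.sin_sub]
  ring

lemma inv_sin_sub_comm (a b : ℝ) : (Real.sin (a - b))⁻¹ = -(Real.sin (b - a))⁻¹ := by
  rw [← neg_sub b a, Real.sin_neg, inv_neg]

lemma cot_sub_comm (a b : ℝ) : Real.cot (a - b) = -Real.cot (b - a) := by
  rw [← neg_sub b a, Real.cot_eq_cos_div_sin, Real.sin_neg, Real.cos_neg, div_neg,
    ← Real.cot_eq_cos_div_sin]

lemma isHermitian_I_smul_cscMatrix (z : ι → ℝ) : (Complex.I • cscMatrix z).IsHermitian := by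
  ext j k
  simp only [conjTranspose_apply, Matrix.smul_apply, cscMatrix, inv_sin_sub_comm (z k), smul_eq_mul,
    Complex.star_def, map_mul, Complex.conj_I, Complex.conj_ofReal, Complex.ofReal_neg, map_neg,
    neg_mul_neg]

lemma isHermitian_cscMatrixRemainder [Fintype ι] [DecidableEq ι] (z : ι → ℝ) :
    (cscMatrixRemainder z).IsHermitian := by
  ext r t
  rw [conjTranspose_apply, cscMatrixRemainder, cscMatrixRemainder, Complex.star_def,
    Complex.conj_ofReal, inv_sin_sub_comm, cot_sub_comm, neg_mul_neg]
  obtain rfl | hrt := eq_or_ne r t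
  · rfl
  · rw [if_neg hrt, if_neg hrt.symm]

lemma sin_ne_zero_of_separated {c : ℝ} (hc : 0 < c) {z : ι → ℝ}
    (hz : Pairwise fun j k => c ≤ ‖((z j - z k : ℝ) : AddCircle π)‖) :
    Pairwise fun j k => Real.sin (z j - z k) ≠ 0 := by
  intro j k hjk hsin
  obtain ⟨n, hn⟩ := Real.sin_eq_zero_iff.1 hsin
  have hzero : ((z j - z k : ℝ) : AddCircle π) = 0 :=
    (AddCircle.coe_eq_zero_iff π).2 ⟨n, by rw [zsmul_eq_mul, hn]⟩
  exact hc.not_ge (by simpa only [hzero, norm_zero] using hz hjk)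

lemma sum_inv_sin_mul_inv_sin [Fintype ι] [DecidableEq ι] {z : ι → ℝ}
    (hz : Pairwise fun j k => Real.sin (z j - z k) ≠ 0) (r t : ι) :
    ∑ q, (Real.sin (z r - z q))⁻¹ * (Real.sin (z t - z q))⁻¹ =
      (Real.sin (z r - z t))⁻¹ * (∑ q, Real.cot (z t - z q) - ∑ q, Real.cot (z r - z q)) +
      (2 * ((Real.sin (z r - z t))⁻¹ * Real.cot (z r - z t)) +
        if r = t then ∑ q, (Real.sin (z r - z q))⁻¹ ^ 2 else 0) := by
  obtain rfl | hrt := eq_or_ne r t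
  · simp [sq]
  have hcot : Real.cot 0 = 0 := by rw [Real.cot_eq_cos_div_sin, Real.sin_zero, div_zero]
  have hterm (q : ι) : (Real.sin (z r - z q))⁻¹ * (Real.sin (z t - z q))⁻¹ =
      (Real.sin (z r - z t))⁻¹ * (Real.cot (z t - z q) - Real.cot (z r - z q)) +
        ((if q = r then (Real.sin (z r - z t))⁻¹ * Real.cot (z r - z t) else 0) +
        if q = t then (Real.sin (z r - z t))⁻¹ * Real.cot (z r - z t) else 0) := by
    obtain rfl | hqr := eq_or_ne q r
    · simp [hrt, hcot, cot_sub_comm (z t) (z q)]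
    obtain rfl | hqt := eq_or_ne q t
    · simp [hqr, hcot]
    · rw [inv_sin_mul_inv_sin_eq (hz hqr.symm) (hz hqt.symm) (by simpa using hz hrt)]
      simp [hqr, hqt]
  simp only [hterm, Finset.sum_add_distrib, ← Finset.mul_sum, Finset.sum_sub_distrib,
    Finset.sum_ite_eq', Finset.mem_univ, if_true, if_neg hrt]
  ring

lemma I_smul_cscMatrix_mul_self [Fintype ι] [DecidableEq ι] {z : ι → ℝ}
    (hz : Pairwise fun j k => Real.sin (z j - z k) ≠ 0) :
    Complex.I • cscMatrix z * Complex.I • cscMatrix z =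
      Complex.I • cscMatrix z * cotDiagonal z - cotDiagonal z * Complex.I • cscMatrix z +
        cscMatrixRemainder z := by
  ext r t
  have hsquare : (Complex.I • cscMatrix z * Complex.I • cscMatrix z) r t =
      ((∑ q, (Real.sin (z r - z q))⁻¹ * (Real.sin (z t - z q))⁻¹ : ℝ) : ℂ) := by
    rw [smul_mul_smul_comm, Complex.I_mul_I, Matrix.smul_apply, mul_apply, neg_one_smul,
      ← Finset.sum_neg_distrib, Complex.ofReal_sum]
    refine Finset.sum_congr rfl fun q _ => ?_
    rw [cscMatrix, cscMatrix, inv_sin_sub_comm (z q) (z t), ← Complex.ofReal_mul, mul_neg,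
      Complex.ofReal_neg, neg_neg]
  rw [hsquare, sum_inv_sin_mul_inv_sin hz, Complex.ofReal_add, Matrix.add_apply,
    ← cscMatrixRemainder, Matrix.sub_apply, cotDiagonal, mul_diagonal, diagonal_mul,
    Matrix.smul_apply, smul_eq_mul, cscMatrix, Complex.ofReal_mul, Complex.ofReal_sub]
  linear_combination ((Real.sin (z r - z t))⁻¹ : ℝ) *
    ((∑ q, Real.cot (z t - z q) : ℝ) - (∑ q, Real.cot (z r - z q) : ℝ) : ℂ) * Complex.I_mul_I

theorem l2_opNorm_cscMatrix_le [Fintype ι] [DecidableEq ι] {c : ℝ} (hc : 0 < c) {z : ι → ℝ}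
    (hz : Pairwise fun j k => c ≤ ‖((z j - z k : ℝ) : AddCircle π)‖) :
    ‖cscMatrix z‖ ≤ π / c := by
  have hrow (r : ι) : ∑ t, ‖cscMatrixRemainder z r t‖ ≤ (π / c) ^ 2 := by
    calc ∑ t, ‖cscMatrixRemainder z r t‖
        ≤ ∑ t, (2 * |(Real.sin (z r - z t))⁻¹ * Real.cot (z r - z t)| +
          if r = t then ∑ q, (Real.sin (z r - z q))⁻¹ ^ 2 else 0) := by
          refine Finset.sum_le_sum fun t _ => ?_
          rw [cscMatrixRemainder, Complex.norm_real, Real.norm_eq_abs]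
          refine (abs_add_le _ _).trans_eq ?_
          rw [abs_mul, abs_two, abs_of_nonneg (a := ite _ _ _) (by positivity)]
      _ = ∑ t, (1 + 2 * |Real.cos (z r - z t)|) * (Real.sin (z r - z t))⁻¹ ^ 2 := by
          rw [Finset.sum_add_distrib, Finset.sum_ite_eq, if_pos (Finset.mem_univ r),
            ← Finset.sum_add_distrib]
          refine Finset.sum_congr rfl fun t _ => ?_
          rw [Real.cot_eq_cos_div_sin, abs_mul, abs_div, abs_inv, ← sq_abs (Real.sin _)⁻¹, abs_inv]
          ring
      _ ≤ ∑ t, 3 * (1 / ‖((z r - z t : ℝ) : AddCircle π)‖ ^ 2) :=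
          Finset.sum_le_sum fun t _ => (one_add_two_mul_abs_cos_mul_inv_sin_sq_le _).trans_eq
            (by rw [mul_one_div])
      _ ≤ 3 * (π ^ 2 / (3 * c ^ 2)) := by
          rw [← Finset.mul_sum]
          gcongr
          exact sum_one_div_addCircle_norm_sq_le hc hz r
      _ = (π / c) ^ 2 := by field_simp
  have hsq : ‖Complex.I • cscMatrix z‖ ^ 2 ≤ (π / c) ^ 2 :=
    (l2_opNorm_sq_le_of_mul_self_eq_commutator_add (isHermitian_I_smul_cscMatrix z)
      (I_smul_cscMatrix_mul_self (sin_ne_zero_of_separated hc hz))).trans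
      (l2_opNorm_le_of_forall_sum_norm_le (isHermitian_cscMatrixRemainder z) (by positivity) hrow)
  rw [norm_smul, Complex.norm_I, one_mul] at hsq
  exact le_of_sq_le_sq hsq (by positivity)

end Hilbert

section FourierMatrix

variable {m s : ℕ} {x y : Fin s → ℝ}

lemma dirichlet_kernel_mul_sin (m : ℕ) (t : ℝ) :
    (∑ k : Fin m, Complex.exp (Complex.I * (((((k : ℕ) : ℝ) - ((m : ℝ) - 1) / 2) * t : ℝ) : ℂ))) *
      (Real.sin (t / 2) : ℂ) = (Real.sin (m * (t / 2)) : ℂ) := by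
  let g : ℕ → ℂ := fun k =>
    -Complex.I / 2 * Complex.exp (Complex.I * (((k : ℝ) - (m : ℝ) / 2) * t : ℝ))
  have hstep (k : ℕ) : Complex.exp (Complex.I * ((((k : ℝ) - ((m : ℝ) - 1) / 2) * t : ℝ) : ℂ)) *
      (Real.sin (t / 2) : ℂ) = g (k + 1) - g k := by
    simp only [g]
    rw [Complex.ofReal_sin, Complex.sin]
    push_cast
    rw [show Complex.I * (((k : ℂ) + 1 - (m : ℂ) / 2) * t) =
      Complex.I * (((k : ℂ) - ((m : ℂ) - 1) / 2) * t) + (t : ℂ) / 2 * Complex.I by ring,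
      show Complex.I * (((k : ℂ) - (m : ℂ) / 2) * t) =
      Complex.I * (((k : ℂ) - ((m : ℂ) - 1) / 2) * t) + -((t : ℂ) / 2) * Complex.I by ring,
      Complex.exp_add, Complex.exp_add]
    ring
  rw [Fin.sum_univ_eq_sum_range
    (fun k : ℕ => Complex.exp (Complex.I * ((((k : ℝ) - ((m : ℝ) - 1) / 2) * t : ℝ) : ℂ))),
    Finset.sum_mul, Finset.sum_congr rfl fun k _ => hstep k, Finset.sum_range_sub]
  simp only [g]
  rw [Complex.ofReal_sin, Complex.sin]
  push_cast
  rw [show Complex.I * (((m : ℂ) - (m : ℂ) / 2) * t) = (m : ℂ) * (t / 2) * Complex.I by ring,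
    show Complex.I * (((0 : ℂ) - (m : ℂ) / 2) * t) = -((m : ℂ) * (t / 2)) * Complex.I by ring]
  ring

lemma star_fourierMatrix_mul_fourierMatrix (k : Fin m) (j l : Fin s) :
    star (fourierMatrix m x k j) * fourierMatrix m x k l =
      Complex.exp (Complex.I *
        (((((k : ℕ) : ℝ) - ((m : ℝ) - 1) / 2) * (x l - x j) : ℝ) : ℂ)) := by
  simp only [fourierMatrix]
  rw [← starRingEnd_apply, ← Complex.exp_conj, ← Complex.exp_add]
  congr 1
  simp only [map_mul, Complex.conj_I, Complex.conj_ofReal]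
  push_cast
  ring

lemma fourierMatrix_gram_apply (hx : Pairwise fun j k => Real.sin (x j / 2 - x k / 2) ≠ 0)
    (j l : Fin s) :
    ((fourierMatrix m x)ᴴ * fourierMatrix m x) j l = ((m : ℝ) : ℂ) * (1 : Matrix _ _ ℂ) j l +
      (Real.sin (m * (x j / 2 - x l / 2)) : ℂ) * cscMatrix (fun i => x i / 2) j l := by
  simp only [mul_apply, conjTranspose_apply, star_fourierMatrix_mul_fourierMatrix]
  obtain rfl | hjl := eq_or_ne j l
  · simp [cscMatrix]
  · have hsin : (Real.sin ((x l - x j) / 2) : ℂ) ≠ 0 := by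
      rw [sub_div]
      exact_mod_cast hx hjl.symm
    rw [eq_div_of_mul_eq hsin (dirichlet_kernel_mul_sin m (x l - x j)), one_apply_ne hjl, mul_zero,
      zero_add, cscMatrix, ← neg_sub (x l / 2), mul_neg, Real.sin_neg, Real.sin_neg, inv_neg,
      sub_div, Complex.ofReal_neg, Complex.ofReal_neg, neg_mul_neg, Complex.ofReal_inv,
      div_eq_mul_inv]

/-- The diagonal matrix of phases `e^{i m x_j / 2}`, which turns the Dirichlet kernel of the Gram
matrix into the Hilbert kernel. -/
def halfPhase (m : ℕ) (x : Fin s → ℝ) : Matrix (Fin s) (Fin s) ℂ :=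
  diagonal fun j => Complex.exp ((m * (x j / 2) : ℝ) * Complex.I)

lemma l2_opNorm_halfPhase_le : ‖halfPhase m x‖ ≤ 1 := by
  rw [halfPhase, l2_opNorm_diagonal]
  exact (pi_norm_le_iff_of_nonneg zero_le_one).2 fun j => (Complex.norm_exp_ofReal_mul_I _).le

lemma fourierMatrix_gram_sub_eq (hx : Pairwise fun j k => Real.sin (x j / 2 - x k / 2) ≠ 0) :
    (fourierMatrix m x)ᴴ * fourierMatrix m x - ((m : ℝ) : ℂ) • 1 =
      (2 * Complex.I)⁻¹ • (halfPhase m x * cscMatrix (fun i => x i / 2) * (halfPhase m x)ᴴ -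
        (halfPhase m x)ᴴ * cscMatrix (fun i => x i / 2) * halfPhase m x) := by
  have hstar (t : ℝ) : star (Complex.exp (t * Complex.I)) = Complex.exp (-t * Complex.I) := by
    rw [← starRingEnd_apply, ← Complex.exp_conj]
    simp
  have hsin (t u : ℝ) : (Real.sin (t - u) : ℂ) = (2 * Complex.I)⁻¹ *
      (Complex.exp (t * Complex.I) * Complex.exp (-u * Complex.I) -
        Complex.exp (-t * Complex.I) * Complex.exp (u * Complex.I)) := by
    rw [Complex.ofReal_sin, Complex.sin, ← Complex.exp_add, ← Complex.exp_add, mul_inv,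
      Complex.inv_I, Complex.ofReal_sub]
    ring_nf
  ext j l
  rw [Matrix.sub_apply, fourierMatrix_gram_apply hx, Matrix.smul_apply, smul_eq_mul,
    add_sub_cancel_left, mul_sub, hsin]
  simp only [halfPhase, diagonal_conjTranspose, Matrix.smul_apply, Matrix.sub_apply, mul_diagonal,
    diagonal_mul, Pi.star_apply, hstar, smul_eq_mul]
  ring

theorem norm_fourierMatrix_gram_sub_le {δ : ℝ} (hδ : 0 < δ)
    (hx : Pairwise fun j k => δ ≤ torusDist (x j) (x k)) :
    ‖(fourierMatrix m x)ᴴ * fourierMatrix m x - ((m : ℝ) : ℂ) • 1‖ ≤ 2 * π / δ := by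
  have hhalf : Pairwise fun j k => δ / 2 ≤ ‖((x j / 2 - x k / 2 : ℝ) : AddCircle π)‖ := by
    intro j k hjk
    have hscale := AddCircle.norm_coe_mul π (x j / 2 - x k / 2) 2
    rw [mul_sub, mul_div_cancel₀ _ two_ne_zero, mul_div_cancel₀ _ two_ne_zero,
      ← torusDist_eq_addCircle_norm, abs_two] at hscale
    linarith [hx hjk]
  have hcsc := l2_opNorm_cscMatrix_le (half_pos hδ) (z := fun i => x i / 2) hhalf
  have hconj {U V : Matrix (Fin s) (Fin s) ℂ} (hU : ‖U‖ ≤ 1) (hV : ‖V‖ ≤ 1) :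
      ‖U * cscMatrix (fun i => x i / 2) * V‖ ≤ 1 * (π / (δ / 2)) * 1 := by
    refine (norm_mul_le _ _).trans ?_
    gcongr
    exact (norm_mul_le _ _).trans (by gcongr)
  have hphase : ‖halfPhase m x‖ ≤ 1 := l2_opNorm_halfPhase_le
  have hphase' : ‖(halfPhase m x)ᴴ‖ ≤ 1 := (l2_opNorm_conjTranspose _).trans_le hphase
  rw [fourierMatrix_gram_sub_eq (sin_ne_zero_of_separated (half_pos hδ) hhalf), norm_smul]
  calc _ ≤ 1 / 2 * (1 * (π / (δ / 2)) * 1 + 1 * (π / (δ / 2)) * 1) := by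
        gcongr
        · simp
        · exact (norm_sub_le _ _).trans (add_le_add (hconj hphase hphase') (hconj hphase' hphase))
    _ = 2 * π / δ := by field_simp; ring

lemma norm_fourierMatrix_gram_sub_le_div {β : ℝ} (hm : 0 < m) (hβ : 0 < β)
    (hx : Pairwise fun j k => 2 * π * β / m ≤ torusDist (x j) (x k)) :
    ‖(fourierMatrix m x)ᴴ * fourierMatrix m x - ((m : ℝ) : ℂ) • 1‖ ≤ m / β := by
  have hδ : 0 < 2 * π * β / m := div_pos (by positivity) (Nat.cast_pos.2 hm)
  refine (norm_fourierMatrix_gram_sub_le hδ hx).trans_eq ?_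
  field_simp

lemma norm_fourierMatrix_le {β : ℝ} (hm : 0 < m) (hβ : 0 < β)
    (hx : Pairwise fun j k => 2 * π * β / m ≤ torusDist (x j) (x k)) :
    ‖fourierMatrix m x‖ ≤ √(m + m / β) :=
  l2_opNorm_le_sqrt_of_norm_gram_sub_le m.cast_nonneg (norm_fourierMatrix_gram_sub_le_div hm hβ hx)

lemma isUnit_fourierMatrix_gram {β : ℝ} (hm : 0 < m) (hβ : 1 < β)
    (hx : Pairwise fun j k => 2 * π * β / m ≤ torusDist (x j) (x k)) :
    IsUnit ((fourierMatrix m x)ᴴ * fourierMatrix m x) :=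
  isUnit_of_norm_sub_smul_one_lt
    ((norm_fourierMatrix_gram_sub_le_div hm (zero_lt_one.trans hβ) hx).trans_lt
      (div_lt_self (Nat.cast_pos.2 hm) hβ))

lemma norm_leftPinv_fourierMatrix_sq_le {β : ℝ} (hm : 0 < m) (hβ : 1 < β)
    (hx : Pairwise fun j k => 2 * π * β / m ≤ torusDist (x j) (x k)) :
    ‖leftPinv (fourierMatrix m x)‖ ^ 2 ≤ β / ((β - 1) * m) := by
  have hm' : (0 : ℝ) < m := Nat.cast_pos.2 hm
  rw [l2_opNorm_leftPinv_sq (isUnit_fourierMatrix_gram hm hβ hx)]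
  refine (norm_inv_le_of_norm_sub_smul_one_le (div_lt_self hm' hβ)
    (norm_fourierMatrix_gram_sub_le_div hm (zero_lt_one.trans hβ) hx)).trans_eq ?_
  have hβ' : β - 1 ≠ 0 := (sub_pos.2 hβ).ne'
  field_simp

lemma norm_fourierMatrix_apply_sub_le (k : Fin m) (l : Fin s) :
    ‖fourierMatrix m x k l - fourierMatrix m y k l‖ ≤
      |((k : ℕ) : ℝ) - ((m : ℝ) - 1) / 2| * |x l - y l| := by
  simp only [fourierMatrix]
  set q := ((k : ℕ) : ℝ) - ((m : ℝ) - 1) / 2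
  have hfactor : Complex.exp (Complex.I * (q * x l : ℝ)) - Complex.exp (Complex.I * (q * y l : ℝ)) =
      Complex.exp ((q * y l : ℝ) * Complex.I) *
        (Complex.exp (Complex.I * (q * (x l - y l) : ℝ)) - 1) := by
    rw [mul_sub, ← Complex.exp_add, mul_one, mul_comm _ Complex.I, ← mul_add, ← Complex.ofReal_add]
    ring_nf
  rw [hfactor, norm_mul, Complex.norm_exp_ofReal_mul_I, one_mul, ← abs_mul]
  exact Real.norm_exp_I_mul_ofReal_sub_one_le

lemma sum_sq_sub_center (m : ℕ) :
    ∑ k : Fin m, (((k : ℕ) : ℝ) - ((m : ℝ) - 1) / 2) ^ 2 =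
      (m : ℝ) * ((m : ℝ) ^ 2 - 1) / 12 := by
  have hsum (t : ℝ) (n : ℕ) : ∑ k ∈ Finset.range n, ((k : ℝ) - t) ^ 2 =
      n * (n - 1) * (2 * n - 1) / 6 - t * (n * (n - 1)) + n * t ^ 2 := by
    induction n with
    | zero => simp
    | succ n ih => rw [Finset.sum_range_succ, ih]; push_cast; ring
  rw [Fin.sum_univ_eq_sum_range (fun k : ℕ => ((k : ℝ) - ((m : ℝ) - 1) / 2) ^ 2), hsum]
  ring

lemma norm_fourierMatrix_sub_le {ε : ℝ} (hε : 0 ≤ ε) (hxy : ∀ l, |x l - y l| ≤ ε) :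
    ‖fourierMatrix m x - fourierMatrix m y‖ ≤ √(s * m ^ 3 / 12) * ε := by
  refine (l2_opNorm_le_sqrt_sum_sq _).trans ?_
  rw [← Real.sqrt_sq hε, ← Real.sqrt_mul (by positivity)]
  apply Real.sqrt_le_sqrt
  calc ∑ k, ∑ l, ‖(fourierMatrix m x - fourierMatrix m y) k l‖ ^ 2
      ≤ ∑ k : Fin m, ∑ _l : Fin s, (|((k : ℕ) : ℝ) - ((m : ℝ) - 1) / 2| * ε) ^ 2 := by
        gcongr with k _ l _
        exact (norm_fourierMatrix_apply_sub_le k l).trans (by gcongr; exact hxy l)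
    _ = s * (m * (m ^ 2 - 1) / 12) * ε ^ 2 := by
        simp only [mul_pow, sq_abs, Finset.sum_const, Finset.card_univ, Fintype.card_fin,
          nsmul_eq_mul, ← Finset.mul_sum, ← Finset.sum_mul, sum_sq_sub_center]
        ring
    _ ≤ s * m ^ 3 / 12 * ε ^ 2 := by
        gcongr
        have : (0 : ℝ) ≤ s * m := by positivity
        linarith

end FourierMatrix

section Samples

variable {m s : ℕ}

lemma toeplitz_cleanSamples (x : Fin s → ℝ) (a : Fin s → ℂ) :
    toeplitz m (cleanSamples m x a) =
      fourierMatrix m x * diagonal a * (fourierMatrix m x)ᴴ := by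
  ext j k
  rw [mul_apply]
  simp only [toeplitz, cleanSamples, mul_diagonal, conjTranspose_apply]
  refine Finset.sum_congr rfl fun l _ => ?_
  have hk := k.isLt
  have hcast : (((j : ℕ) + (m - 1) - (k : ℕ) : ℕ) : ℝ) = (j : ℕ) + ((m : ℝ) - 1) - (k : ℕ) := by
    rw [Nat.cast_sub (by omega), Nat.cast_add, Nat.cast_sub (by omega), Nat.cast_one]
  simp only [fourierMatrix]
  rw [hcast, ← starRingEnd_apply, ← Complex.exp_conj, mul_comm (Complex.exp _) (a l), mul_assoc,
    ← Complex.exp_add]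
  congr 2
  simp only [map_mul, Complex.conj_I, Complex.conj_ofReal]
  push_cast
  ring

lemma toeplitz_add (y η : Fin (2 * m - 1) → ℂ) :
    toeplitz m (y + η) = toeplitz m y + toeplitz m η := rfl

lemma cleanSamples_add_int_mul_two_pi (x : Fin s → ℝ) (a : Fin s → ℂ) (n : Fin s → ℤ) :
    cleanSamples m (fun j => x j + n j * (2 * π)) a = cleanSamples m x a := by
  funext k
  refine Finset.sum_congr rfl fun l _ => ?_
  have hphase : Complex.I * (((((k : ℕ) : ℝ) - ((m : ℝ) - 1)) * (x l + n l * (2 * π)) : ℝ) : ℂ) =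
      Complex.I * (((((k : ℕ) : ℝ) - ((m : ℝ) - 1)) * x l : ℝ) : ℂ) +
        ((((k : ℕ) : ℤ) - ((m : ℤ) - 1)) * n l : ℤ) * (2 * π * Complex.I) := by
    push_cast
    ring
  rw [hphase, Complex.exp_add, Complex.exp_int_mul_two_pi_mul_I, mul_one]

lemma torusDist_add_int_mul_two_pi (u v : ℝ) (k l : ℤ) :
    torusDist (u + k * (2 * π)) (v + l * (2 * π)) = torusDist u v := by
  rw [torusDist_eq_addCircle_norm, torusDist_eq_addCircle_norm]
  simp

lemma exists_abs_add_int_mul_two_pi_sub_eq_torusDist (u v : ℝ) :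
    ∃ n : ℤ, |u + n * (2 * π) - v| = torusDist u v := by
  obtain ⟨n, hn⟩ := exists_abs_add_int_mul_eq_addCircle_norm (2 * π) (u - v)
  exact ⟨n, by rw [torusDist_eq_addCircle_norm, ← hn, sub_add_eq_add_sub]⟩

lemma specNorm_eq_l2_opNorm {d e : ℕ} (M : Matrix (Fin d) (Fin e) ℂ) : specNorm M = ‖M‖ := rfl

end Samples

section Amplitudes

variable {m s : ℕ} {β : ℝ} {x y : Fin s → ℝ}

theorem norm_diagonal_sub_leftPinv_mul_le {ε : ℝ} (hm : 0 < m) (hβ : 1 < β)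
    (hx : Pairwise fun j k => 2 * π * β / m ≤ torusDist (x j) (x k))
    (hy : Pairwise fun j k => 2 * π * β / m ≤ torusDist (y j) (y k))
    (hε : 0 ≤ ε) (hxy : ∀ i, |x i - y i| ≤ ε) (a : Fin s → ℂ) (N : Matrix (Fin m) (Fin m) ℂ) :
    ‖diagonal a - leftPinv (fourierMatrix m y) *
        (fourierMatrix m x * diagonal a * (fourierMatrix m x)ᴴ + N) *
        (leftPinv (fourierMatrix m y))ᴴ‖ ≤
      √(β / (β - 1)) / √12 * (1 + √((β + 1) / (β - 1))) * √s * ‖a‖ * m * ε +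
        β / (β - 1) * ‖N‖ / m := by
  have hm' : (0 : ℝ) < m := Nat.cast_pos.2 hm
  have hβ₀ : 0 < β := zero_lt_one.trans hβ
  have hβ₁ : 0 < β - 1 := sub_pos.2 hβ
  set P := leftPinv (fourierMatrix m y)
  have hP_sq : ‖P‖ ^ 2 ≤ β / ((β - 1) * m) := norm_leftPinv_fourierMatrix_sq_le hm hβ hy
  have hP : ‖P‖ ≤ √(β / ((β - 1) * m)) := Real.le_sqrt_of_sq_le hP_sq
  have hΦ : ‖fourierMatrix m x‖ ≤ √(m + m / β) := norm_fourierMatrix_le hm hβ₀ hx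
  have hdiff := norm_fourierMatrix_sub_le (m := m) hε hxy
  have hPΦ : √(β / ((β - 1) * m)) * √(m + m / β) = √((β + 1) / (β - 1)) := by
    rw [← Real.sqrt_mul (by positivity)]
    congr 1
    field_simp
  have hPdiff : √(β / ((β - 1) * m)) * √(s * m ^ 3 / 12) = √(β / (β - 1)) / √12 * √s * m := by
    calc _ = √(β / (β - 1) / 12 * s * m ^ 2) := by
          rw [← Real.sqrt_mul (by positivity)]
          congr 1
          field_simp
      _ = _ := by
          rw [Real.sqrt_mul (by positivity), Real.sqrt_mul (by positivity), Real.sqrt_sq hm'.le,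
            Real.sqrt_div (by positivity)]
  refine (norm_sub_mul_mul_conjTranspose_le
    (leftPinv_mul_self (isUnit_fourierMatrix_gram hm hβ hy)) (diagonal a) N).trans ?_
  rw [l2_opNorm_diagonal]
  calc ‖P‖ * ‖fourierMatrix m x - fourierMatrix m y‖ * ‖a‖ * (1 + ‖P‖ * ‖fourierMatrix m x‖) +
        ‖P‖ ^ 2 * ‖N‖
      ≤ √(β / ((β - 1) * m)) * (√(s * m ^ 3 / 12) * ε) * ‖a‖ *
          (1 + √(β / ((β - 1) * m)) * √(m + m / β)) + β / ((β - 1) * m) * ‖N‖ := by gcongr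
    _ = _ := by
        rw [hPΦ, ← mul_assoc, hPdiff]
        field_simp

lemma sqrt_div_sqrt_twelve_le (hβ : 1 < β) :
    √(β / (β - 1)) / √12 ≤ 1 / √3 * √((β + 1) / β) * (β / (β - 1)) := by
  have hβ₁ : 0 < β - 1 := sub_pos.2 hβ
  have hκ : 0 ≤ β / (β - 1) := by positivity
  have hsq : β / (β - 1) / 12 ≤ 1 / 3 * ((β + 1) / β) * (β / (β - 1)) ^ 2 := by
    rw [show 1 / 3 * ((β + 1) / β) * (β / (β - 1)) ^ 2 =
      β / (β - 1) / 12 * (4 * (β + 1) / (β - 1)) by field_simp; norm_num]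
    refine le_mul_of_one_le_right (by positivity) ?_
    rw [one_le_div hβ₁]
    linarith
  calc √(β / (β - 1)) / √12 = √(β / (β - 1) / 12) := (Real.sqrt_div hκ _).symm
    _ ≤ √(1 / 3 * ((β + 1) / β) * (β / (β - 1)) ^ 2) := Real.sqrt_le_sqrt hsq
    _ = 1 / √3 * √((β + 1) / β) * (β / (β - 1)) := by
        rw [Real.sqrt_mul (by positivity), Real.sqrt_mul (by positivity), Real.sqrt_sq hκ,
          Real.sqrt_div zero_le_one, Real.sqrt_one]

end Amplitudes

/-- **Amplitude estimation error for the quadratic method** (Lemma `lem:amplitudes`).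
If `Δ(x) ≥ 2πβ/m` and `Δ(x̂) ≥ 2πβ/m`, `T̃ = T(y+η)`, `Φ̂ = Φ(m,x̂)`, and
`â = diag(Φ̂⁺ T̃ (Φ̂⁺)^*)`, then
`max_j |a_j − â_j| ≤ C(β) √s a_max m max_j |x_j − x̂_j| + (β/(β−1)) ‖T(η)‖₂ / m`. -/
theorem amplitude_estimation (m s : ℕ) (hs : 1 ≤ s) (hsm : s ≤ m)
    (β : ℝ) (hβ : 1 < β)
    (x xh : Fin s → ℝ)
    (hsepx : ∀ j k : Fin s, j ≠ k → 2 * Real.pi * β / m ≤ torusDist (x j) (x k))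
    (hsepxh : ∀ j k : Fin s, j ≠ k → 2 * Real.pi * β / m ≤ torusDist (xh j) (xh k))
    (a : Fin s → ℂ) (ha : ∀ j, a j ≠ 0)
    (η : Fin (2 * m - 1) → ℂ)
    (Tt : Matrix (Fin m) (Fin m) ℂ)
    (hTt : Tt = toeplitz m (cleanSamples m x a + η))
    (pinv : Matrix (Fin s) (Fin m) ℂ)
    (hpinv : pinv = ((fourierMatrix m xh)ᴴ * fourierMatrix m xh)⁻¹ * (fourierMatrix m xh)ᴴ)
    (ah : Fin s → ℂ)
    (hah : ah = fun i => (pinv * Tt * pinvᴴ) i i)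
    (Cβ : ℝ)
    (hCβ : Cβ = (1 / Real.sqrt 3) * (1 + Real.sqrt ((β + 1) / (β - 1))) *
        Real.sqrt ((β + 1) / β) * (β / (β - 1))) :
    ∀ j, ‖a j - ah j‖ ≤
      Cβ * Real.sqrt s * (⨆ i, ‖a i‖) * m * (⨆ i, torusDist (x i) (xh i)) +
        (β / (β - 1)) * specNorm (toeplitz m η) / m := by
  subst hTt hpinv hah hCβ
  have hm : 0 < m := hs.trans hsm
  choose n hn using fun i => exists_abs_add_int_mul_two_pi_sub_eq_torusDist (x i) (xh i)
  have hsepx' : Pairwise fun j k => 2 * π * β / m ≤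
      torusDist (x j + n j * (2 * π)) (x k + n k * (2 * π)) := fun j k hjk =>
    (hsepx j k hjk).trans_eq (torusDist_add_int_mul_two_pi _ _ _ _).symm
  have hdist (i : Fin s) : |x i + n i * (2 * π) - xh i| ≤ ⨆ i, torusDist (x i) (xh i) :=
    hn i ▸ Finite.le_ciSup (fun i => torusDist (x i) (xh i)) i
  intro j
  have hε : 0 ≤ ⨆ i, torusDist (x i) (xh i) := (abs_nonneg _).trans (hdist j)
  have hbound := norm_diagonal_sub_leftPinv_mul_le hm hβ hsepx' (fun j k => hsepxh j k) hε hdist a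
    (toeplitz m η)
  rw [← toeplitz_cleanSamples, cleanSamples_add_int_mul_two_pi, ← toeplitz_add] at hbound
  have hentry := (norm_entry_le_l2_opNorm _ j j).trans hbound
  rw [Matrix.sub_apply, diagonal_apply_eq] at hentry
  refine hentry.trans ?_
  rw [specNorm_eq_l2_opNorm, mul_right_comm (1 / √3),
    mul_right_comm (1 / √3 * √((β + 1) / β))]
  gcongr
  · exact sqrt_div_sqrt_twelve_le hβ
  · exact pi_norm_le_iSup_norm a

end
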